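/- arXiv:0808.1714 — 2 statements merged into one kernel-verified Lean document; each statement's English description precedes it below -/
import Mathlib

section
/- The space of torsion tensors on ℝ⁴ satisfying (1/3)W_i = Z_{ijk} for every direct ordering (i,j,k,l) equals the internal direct sum Vec ⊕ 𝒜₊ ⊕ Alt, and in particular has dimension 16. -/
/-!
Write `T_{ijk}` for the coefficients of `T` and `c(T)_i = Σ_m T_{imm}` for its trace.  For a
torsion tensor and a direct ordering `(i,j,k,l)` one has
`Z_{ijk} = c(T)_i + (T_{jkl} - T_{ill})`, because `T_{iii} = 0`.  Hence `T` solves the equations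
iff `T_{jkl} - T_{ill}` depends on `i` only (`mem_PureSol_iff`).

In this form the three summands visibly lie in the solution space: the difference is `-ν_i` on
`T_ν`, it is `T_{jkl}`, which is invariant under cyclic permutations of `j, k, l`, on `Alt`, and
it vanishes on `𝒜₊` by selfduality.  Conversely, a torsion tensor is the sum of its vectorial part
`T_ν` with `ν = c(T)/3`, its alternating part `𝔟(T)/3`, and a remainder in `𝒜`.  If `T` is a
solution then so is the remainder `R`; summing `R_{jkl} - R_{ill} = d_i` over the cyclic
permutations of `j, k, l` gives `3 d_i = 𝔟(R)_{jkl} - c(R)_i = 0`, and `R_{jkl} = R_{ill}` is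
selfduality (`PureSol_inf_CartanA_le`).  Independence follows by applying `c` and `𝔟`.

For the dimension, a solution is determined by the twelve numbers `T_{ill}`, `l ≠ i`, and the four
numbers `d_i`, and these are arbitrary: they form a `4 × 4` matrix (`solParam`).
-/

noncomputable section

set_option maxSynthPendingDepth 3

/-- Euclidean `n`-space `ℝⁿ`. -/
abbrev V (n : ℕ) := Fin n → ℝ

/-- Trilinear forms on `ℝⁿ`. -/
abbrev Tri (n : ℕ) := V n →ₗ[ℝ] V n →ₗ[ℝ] V n →ₗ[ℝ] ℝ

/-- The standard inner product on `ℝⁿ`. -/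
def inn {n : ℕ} (X Y : V n) : ℝ := ∑ i, X i * Y i

/-- The standard orthonormal basis of `ℝⁿ`. -/
def stdB {n : ℕ} (i : Fin n) : V n := Pi.single i 1

/-- Torsion tensors: trilinear forms antisymmetric in the first two arguments. -/
def Torsion (n : ℕ) : Submodule ℝ (Tri n) where
  carrier := {T | ∀ X Y Z, T X Y Z = - T Y X Z}
  zero_mem' := by intro X Y Z; simp
  add_mem' := by
    intro T S hT hS X Y Z
    simp only [LinearMap.add_apply]
    linear_combination hT X Y Z + hS X Y Z
  smul_mem' := by
    intro c T hT X Y Z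
    simp only [LinearMap.smul_apply, smul_eq_mul]
    linear_combination c * hT X Y Z

/-- The kernel of the Bianchi map `𝔟(T)(X,Y,Z) = T(X,Y,Z) + T(Y,Z,X) + T(Z,X,Y)`. -/
def kerBianchi (n : ℕ) : Submodule ℝ (Tri n) where
  carrier := {T | ∀ X Y Z, T X Y Z + T Y Z X + T Z X Y = 0}
  zero_mem' := by intro X Y Z; simp
  add_mem' := by
    intro T S hT hS X Y Z
    simp only [LinearMap.add_apply]
    linear_combination hT X Y Z + hS X Y Z
  smul_mem' := by
    intro c T hT X Y Z
    simp only [LinearMap.smul_apply, smul_eq_mul]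
    linear_combination c * hT X Y Z

/-- The kernel of the trace map `c(T)(X) = Σⱼ T(X,eⱼ,eⱼ)`. -/
def kerTrace (n : ℕ) : Submodule ℝ (Tri n) where
  carrier := {T | ∀ X, ∑ j, T X (stdB j) (stdB j) = 0}
  zero_mem' := by intro X; simp
  add_mem' := by
    intro T S hT hS X
    simp only [LinearMap.add_apply, Finset.sum_add_distrib]
    rw [hT X, hS X]; ring
  smul_mem' := by
    intro c T hT X
    simp only [LinearMap.smul_apply, smul_eq_mul, ← Finset.mul_sum]
    rw [hT X, mul_zero]
/-- The Cartan component `𝒜 = ker 𝔟 ∩ ker c` (inside the torsion tensors). -/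
def CartanA (n : ℕ) : Submodule ℝ (Tri n) := Torsion n ⊓ kerBianchi n ⊓ kerTrace n

/-- The vectorial component: tensors `T_ν(X,Y,Z) = ν(X)⟨Y,Z⟩ − ν(Y)⟨X,Z⟩`. -/
def VecT (n : ℕ) : Submodule ℝ (Tri n) where
  carrier := {T | ∃ ν : V n →ₗ[ℝ] ℝ, ∀ X Y Z,
      T X Y Z = ν X * inn Y Z - ν Y * inn X Z}
  zero_mem' := ⟨0, by intro X Y Z; simp⟩
  add_mem' := by
    rintro T S ⟨ν, hν⟩ ⟨ρ, hρ⟩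
    refine ⟨ν + ρ, fun X Y Z => ?_⟩
    simp only [LinearMap.add_apply]
    linear_combination hν X Y Z + hρ X Y Z
  smul_mem' := by
    rintro c T ⟨ν, hν⟩
    refine ⟨c • ν, fun X Y Z => ?_⟩
    simp only [LinearMap.smul_apply, smul_eq_mul]
    linear_combination c * hν X Y Z

/-- The totally alternating trilinear forms. -/
def AltT (n : ℕ) : Submodule ℝ (Tri n) where
  carrier := {T | (∀ X Y Z, T X Y Z = - T Y X Z) ∧ (∀ X Y Z, T X Y Z = - T X Z Y)}
  zero_mem' := ⟨by intro X Y Z; simp, by intro X Y Z; simp⟩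
  add_mem' := by
    rintro T S ⟨hT1, hT2⟩ ⟨hS1, hS2⟩
    constructor
    · intro X Y Z
      simp only [LinearMap.add_apply]
      linear_combination hT1 X Y Z + hS1 X Y Z
    · intro X Y Z
      simp only [LinearMap.add_apply]
      linear_combination hT2 X Y Z + hS2 X Y Z
  smul_mem' := by
    rintro c T ⟨hT1, hT2⟩
    constructor
    · intro X Y Z
      simp only [LinearMap.smul_apply, smul_eq_mul]
      linear_combination c * hT1 X Y Z
    · intro X Y Z
      simp only [LinearMap.smul_apply, smul_eq_mul]
      linear_combination c * hT2 X Y Z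


/-! ### Selfdual and anti-selfdual 2-forms on `ℝ⁴` -/

/-- The selfdual 2-form `e⁰∧e¹ + e²∧e³`. -/
def sd₁ (X Y : V 4) : ℝ := (X 0 * Y 1 - X 1 * Y 0) + (X 2 * Y 3 - X 3 * Y 2)

/-- The selfdual 2-form `e⁰∧e² + e³∧e¹`. -/
def sd₂ (X Y : V 4) : ℝ := (X 0 * Y 2 - X 2 * Y 0) + (X 3 * Y 1 - X 1 * Y 3)

/-- The selfdual 2-form `e⁰∧e³ + e¹∧e²`. -/
def sd₃ (X Y : V 4) : ℝ := (X 0 * Y 3 - X 3 * Y 0) + (X 1 * Y 2 - X 2 * Y 1)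

/-- The anti-selfdual 2-form `e⁰∧e¹ − e²∧e³`. -/
def asd₁ (X Y : V 4) : ℝ := (X 0 * Y 1 - X 1 * Y 0) - (X 2 * Y 3 - X 3 * Y 2)

/-- The anti-selfdual 2-form `e⁰∧e² − e³∧e¹`. -/
def asd₂ (X Y : V 4) : ℝ := (X 0 * Y 2 - X 2 * Y 0) - (X 3 * Y 1 - X 1 * Y 3)

/-- The anti-selfdual 2-form `e⁰∧e³ − e¹∧e²`. -/
def asd₃ (X Y : V 4) : ℝ := (X 0 * Y 3 - X 3 * Y 0) - (X 1 * Y 2 - X 2 * Y 1)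

/-- `𝒜₊`: members of `𝒜` such that for every `Z` the 2-form `(X,Y) ↦ T(X,Y,Z)` is
a combination of the selfdual forms. -/
def Aplus : Submodule ℝ (Tri 4) where
  carrier := {T | T ∈ CartanA 4 ∧ ∀ Z, ∃ a b c : ℝ, ∀ X Y,
      T X Y Z = a * sd₁ X Y + b * sd₂ X Y + c * sd₃ X Y}
  zero_mem' := ⟨(CartanA 4).zero_mem, fun Z => ⟨0, 0, 0, by intro X Y; simp⟩⟩
  add_mem' := by
    rintro T S ⟨hT, hT'⟩ ⟨hS, hS'⟩
    refine ⟨(CartanA 4).add_mem hT hS, fun Z => ?_⟩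
    obtain ⟨a, b, c, h⟩ := hT' Z
    obtain ⟨a', b', c', h'⟩ := hS' Z
    refine ⟨a + a', b + b', c + c', fun X Y => ?_⟩
    simp only [LinearMap.add_apply]
    linear_combination h X Y + h' X Y
  smul_mem' := by
    rintro r T ⟨hT, hT'⟩
    refine ⟨(CartanA 4).smul_mem r hT, fun Z => ?_⟩
    obtain ⟨a, b, c, h⟩ := hT' Z
    refine ⟨r * a, r * b, r * c, fun X Y => ?_⟩
    simp only [LinearMap.smul_apply, smul_eq_mul]
    linear_combination r * h X Y

/-- `𝒜₋`: members of `𝒜` such that for every `Z` the 2-form `(X,Y) ↦ T(X,Y,Z)` is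
a combination of the anti-selfdual forms. -/
def Aminus : Submodule ℝ (Tri 4) where
  carrier := {T | T ∈ CartanA 4 ∧ ∀ Z, ∃ a b c : ℝ, ∀ X Y,
      T X Y Z = a * asd₁ X Y + b * asd₂ X Y + c * asd₃ X Y}
  zero_mem' := ⟨(CartanA 4).zero_mem, fun Z => ⟨0, 0, 0, by intro X Y; simp⟩⟩
  add_mem' := by
    rintro T S ⟨hT, hT'⟩ ⟨hS, hS'⟩
    refine ⟨(CartanA 4).add_mem hT hS, fun Z => ?_⟩
    obtain ⟨a, b, c, h⟩ := hT' Z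
    obtain ⟨a', b', c', h'⟩ := hS' Z
    refine ⟨a + a', b + b', c + c', fun X Y => ?_⟩
    simp only [LinearMap.add_apply]
    linear_combination h X Y + h' X Y
  smul_mem' := by
    rintro r T ⟨hT, hT'⟩
    refine ⟨(CartanA 4).smul_mem r hT, fun Z => ?_⟩
    obtain ⟨a, b, c, h⟩ := hT' Z
    refine ⟨r * a, r * b, r * c, fun X Y => ?_⟩
    simp only [LinearMap.smul_apply, smul_eq_mul]
    linear_combination r * h X Y

/-- `(i,j,k,l)` is a direct ordering when it is an even permutation of `(0,1,2,3)`. -/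
def DirectOrdering (i j k l : Fin 4) : Prop :=
  ∃ σ : Equiv.Perm (Fin 4), Equiv.Perm.sign σ = 1 ∧ σ 0 = i ∧ σ 1 = j ∧ σ 2 = k ∧ σ 3 = l

instance (i j k l : Fin 4) : Decidable (DirectOrdering i j k l) :=
  inferInstanceAs (Decidable (∃ σ : Equiv.Perm (Fin 4),
    Equiv.Perm.sign σ = 1 ∧ σ 0 = i ∧ σ 1 = j ∧ σ 2 = k ∧ σ 3 = l))

/-- `Z_{ijk} = T_{ijj} + T_{ikk} + T_{jkl}` for a direct ordering `(i,j,k,l)`. -/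
def Zc (T : Tri 4) (i j k l : Fin 4) : ℝ :=
  T (stdB i) (stdB j) (stdB j) + T (stdB i) (stdB k) (stdB k) + T (stdB j) (stdB k) (stdB l)

/-- `W_i`: the sum of `Z_{ijk}` over the three direct orderings `(i,j,k,l)` with
first entry `i`. -/
def Wc (T : Tri 4) (i : Fin 4) : ℝ :=
  ∑ j : Fin 4, ∑ k : Fin 4, ∑ l : Fin 4,
    if DirectOrdering i j k l then Zc T i j k l else 0

lemma Zc_add (T S : Tri 4) (i j k l : Fin 4) :
    Zc (T + S) i j k l = Zc T i j k l + Zc S i j k l := by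
  simp only [Zc, LinearMap.add_apply]; ring

lemma Zc_smul (c : ℝ) (T : Tri 4) (i j k l : Fin 4) :
    Zc (c • T) i j k l = c * Zc T i j k l := by
  simp only [Zc, LinearMap.smul_apply, smul_eq_mul]; ring

lemma Wc_add (T S : Tri 4) (i : Fin 4) : Wc (T + S) i = Wc T i + Wc S i := by
  simp only [Wc, ← Finset.sum_add_distrib]
  refine Finset.sum_congr rfl fun j _ => Finset.sum_congr rfl fun k _ =>
    Finset.sum_congr rfl fun l _ => ?_
  split_ifs with h
  · exact Zc_add T S i j k l
  · simp

lemma Wc_smul (c : ℝ) (T : Tri 4) (i : Fin 4) : Wc (c • T) i = c * Wc T i := by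
  simp only [Wc, Finset.mul_sum]
  refine Finset.sum_congr rfl fun j _ => Finset.sum_congr rfl fun k _ =>
    Finset.sum_congr rfl fun l _ => ?_
  split_ifs with h
  · exact Zc_smul c T i j k l
  · simp

lemma Wc_zero (i : Fin 4) : Wc (0 : Tri 4) i = 0 := by
  simp [Wc, Zc]

/-- The space of torsion tensors satisfying `(1/3) W_i = Z_{ijk}` for every direct
ordering `(i,j,k,l)`. -/
def PureSol : Submodule ℝ (Tri 4) where
  carrier := {T | T ∈ Torsion 4 ∧ ∀ i j k l, DirectOrdering i j k l →
      (1/3 : ℝ) * Wc T i = Zc T i j k l}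
  zero_mem' := ⟨(Torsion 4).zero_mem, fun i j k l _ => by rw [Wc_zero]; simp [Zc]⟩
  add_mem' := by
    rintro T S ⟨hT, hT'⟩ ⟨hS, hS'⟩
    refine ⟨(Torsion 4).add_mem hT hS, fun i j k l h => ?_⟩
    rw [Wc_add, Zc_add]
    linear_combination hT' i j k l h + hS' i j k l h
  smul_mem' := by
    rintro c T ⟨hT, hT'⟩
    refine ⟨(Torsion 4).smul_mem c hT, fun i j k l h => ?_⟩
    rw [Wc_smul, Zc_smul]
    linear_combination c * hT' i j k l h

/-! ### Coefficients of trilinear forms -/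

lemma vec_eq_sum (X : V 4) : X = ∑ i, X i • (stdB i : V 4) := by
  ext m
  simp [stdB, Finset.sum_apply, Pi.single_apply]

lemma Tri_expand_two (T : Tri 4) (X Y Z : V 4) :
    T X Y Z = ∑ i, ∑ j, X i * Y j * T (stdB i) (stdB j) Z := by
  conv_lhs => rw [vec_eq_sum X, vec_eq_sum Y]
  simp only [map_sum, map_smul, LinearMap.sum_apply, LinearMap.smul_apply, smul_eq_mul,
    Finset.mul_sum]
  rw [Finset.sum_comm]
  exact Finset.sum_congr rfl fun i _ => Finset.sum_congr rfl fun j _ => by ring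

lemma linear_expand (f : V 4 →ₗ[ℝ] ℝ) (Z : V 4) : f Z = ∑ k, Z k * f (stdB k) := by
  conv_lhs => rw [vec_eq_sum Z]
  simp

lemma Tri_ext {T S : Tri 4}
    (h : ∀ i j k, T (stdB i) (stdB j) (stdB k) = S (stdB i) (stdB j) (stdB k)) : T = S := by
  refine LinearMap.ext fun X => LinearMap.ext fun Y => LinearMap.ext fun Z => ?_
  rw [Tri_expand_two T, Tri_expand_two S]
  simp only [linear_expand _ Z, h]

/-- The trilinear form with prescribed coefficients. -/
def triOf (t : Fin 4 → Fin 4 → Fin 4 → ℝ) : Tri 4 :=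
  (Pi.basisFun ℝ (Fin 4)).constr ℝ fun i =>
    (Pi.basisFun ℝ (Fin 4)).constr ℝ fun j =>
      (Pi.basisFun ℝ (Fin 4)).constr ℝ fun k => t i j k

lemma triOf_apply (t : Fin 4 → Fin 4 → Fin 4 → ℝ) (i j k : Fin 4) :
    triOf t (stdB i) (stdB j) (stdB k) = t i j k := by
  have h : ∀ m : Fin 4, (stdB m : V 4) = Pi.basisFun ℝ (Fin 4) m := fun m => by
    simp [stdB]
  simp only [triOf, h, Module.Basis.constr_basis]

lemma mem_Torsion_of_coeff {T : Tri 4}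
    (h : ∀ i j k, T (stdB i) (stdB j) (stdB k) = -T (stdB j) (stdB i) (stdB k)) :
    T ∈ Torsion 4 := by
  have hflip : T = -T.flip := Tri_ext fun i j k => by simpa using h i j k
  intro X Y Z
  have := congrArg (fun S : Tri 4 => S X Y Z) hflip
  simpa using this

lemma Torsion_self {T : Tri 4} (hT : T ∈ Torsion 4) (X Z : V 4) : T X X Z = 0 := by
  have := hT X X Z
  linarith

lemma inn_stdB (i j : Fin 4) : inn (stdB i) (stdB j) = if i = j then 1 else 0 := by
  simp [inn, stdB, Pi.single_apply, eq_comm]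

/-! ### Direct orderings -/

lemma directOrdering_iff (i j k l : Fin 4) : DirectOrdering i j k l ↔
    (i, j, k, l) ∈ ([(0,1,2,3), (0,2,3,1), (0,3,1,2), (1,0,3,2), (1,3,2,0), (1,2,0,3),
      (2,3,0,1), (2,0,1,3), (2,1,3,0), (3,2,1,0), (3,1,0,2), (3,0,2,1)] :
      List (Fin 4 × Fin 4 × Fin 4 × Fin 4)) := by
  revert i j k l
  decide +kernel

lemma DirectOrdering.rotate {i j k l : Fin 4} (h : DirectOrdering i j k l) :
    DirectOrdering i k l j := by
  revert i j k l
  decide +kernel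

lemma DirectOrdering.distinct {i j k l : Fin 4} (h : DirectOrdering i j k l) :
    i ≠ j ∧ i ≠ k ∧ i ≠ l ∧ j ≠ k ∧ j ≠ l ∧ k ≠ l := by
  revert i j k l
  decide +kernel

lemma DirectOrdering.double_transpositions {i j k l : Fin 4} (h : DirectOrdering i j k l) :
    DirectOrdering j i l k ∧ DirectOrdering k l i j ∧ DirectOrdering l k j i := by
  revert i j k l
  decide +kernel

lemma DirectOrdering.mem {i j k l : Fin 4} (h : DirectOrdering i j k l) (m : Fin 4) :
    m = i ∨ m = j ∨ m = k ∨ m = l := by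
  revert i j k l m
  decide +kernel

/-- The last three entries of a direct ordering determine the first; after swapping the first
two of these three, no choice of first entry gives a direct ordering. -/
lemma DirectOrdering.tail {i j k l : Fin 4} (h : DirectOrdering i j k l) (m : Fin 4) :
    (DirectOrdering m j k l ↔ m = i) ∧ ¬ DirectOrdering m k j l := by
  revert i j k l m
  decide +kernel

/-- Direct orderings with the same first entry differ by a cyclic permutation of the rest. -/
lemma DirectOrdering.eq_rotate {i j k l j' k' l' : Fin 4} (h : DirectOrdering i j k l)
    (h' : DirectOrdering i j' k' l') :
    (j' = j ∧ k' = k ∧ l' = l) ∨ (j' = k ∧ k' = l ∧ l' = j) ∨ (j' = l ∧ k' = j ∧ l' = k) := by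
  have key : ∀ i j k l : Fin 4, DirectOrdering i j k l → ∀ j' k' l' : Fin 4,
      DirectOrdering i j' k' l' →
      (j' = j ∧ k' = k ∧ l' = l) ∨ (j' = k ∧ k' = l ∧ l' = j) ∨
        (j' = l ∧ k' = j ∧ l' = k) := by
    decide +kernel
  exact key i j k l h j' k' l' h'

lemma exists_directOrdering {j k l : Fin 4} (h₁ : j ≠ k) (h₂ : j ≠ l) (h₃ : k ≠ l) :
    ∃ i, DirectOrdering i j k l ∨ DirectOrdering i k j l := by
  revert j k l
  decide +kernel

lemma exists_directOrdering_head (i : Fin 4) : ∃ j k l, DirectOrdering i j k l := by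
  revert i
  decide +kernel

lemma DirectOrdering.sum_eq {i j k l : Fin 4} (h : DirectOrdering i j k l) (f : Fin 4 → ℝ) :
    ∑ m, f m = f i + f j + f k + f l := by
  obtain ⟨σ, -, rfl, rfl, rfl, rfl⟩ := h
  rw [← Equiv.sum_comp σ, Fin.sum_univ_four]

/-! ### The solution space -/

lemma Wc_eq (T : Tri 4) {i j k l : Fin 4} (h : DirectOrdering i j k l) :
    Wc T i = Zc T i j k l + Zc T i k l j + Zc T i l j k := by
  simp only [directOrdering_iff, List.mem_cons, Prod.mk.injEq, List.not_mem_nil, or_false] at h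
  simp only [Wc, directOrdering_iff, Fin.sum_univ_four]
  rcases h with ⟨rfl, rfl, rfl, rfl⟩ | ⟨rfl, rfl, rfl, rfl⟩ | ⟨rfl, rfl, rfl, rfl⟩ |
    ⟨rfl, rfl, rfl, rfl⟩ | ⟨rfl, rfl, rfl, rfl⟩ | ⟨rfl, rfl, rfl, rfl⟩ | ⟨rfl, rfl, rfl, rfl⟩ |
    ⟨rfl, rfl, rfl, rfl⟩ | ⟨rfl, rfl, rfl, rfl⟩ | ⟨rfl, rfl, rfl, rfl⟩ | ⟨rfl, rfl, rfl, rfl⟩ |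
    ⟨rfl, rfl, rfl, rfl⟩ <;> simp <;> ring

/-- The trace `c(T)_i = Σ_m T_{imm}`. -/
def trc (T : Tri 4) (i : Fin 4) : ℝ := ∑ m, T (stdB i) (stdB m) (stdB m)

lemma Zc_eq {T : Tri 4} (hT : T ∈ Torsion 4) {i j k l : Fin 4} (h : DirectOrdering i j k l) :
    Zc T i j k l = trc T i +
      (T (stdB j) (stdB k) (stdB l) - T (stdB i) (stdB l) (stdB l)) := by
  rw [trc, h.sum_eq, Torsion_self hT, Zc]
  ring

/-- The common value of `T_{jkl} - T_{ill}` over the direct orderings `(i,j,k,l)` starting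
with `i`, for a solution `T`. -/
def defect (T : Tri 4) (i : Fin 4) : ℝ := 1 / 3 * Wc T i - trc T i

lemma defect_eq {T : Tri 4} (hT : T ∈ PureSol) {i j k l : Fin 4}
    (h : DirectOrdering i j k l) :
    T (stdB j) (stdB k) (stdB l) - T (stdB i) (stdB l) (stdB l) = defect T i := by
  have := hT.2 i j k l h
  rw [Zc_eq hT.1 h] at this
  rw [defect]
  linarith

lemma defect_unique {T : Tri 4} (hT : T ∈ Torsion 4) {d : Fin 4 → ℝ}
    (hd : ∀ i j k l, DirectOrdering i j k l →
      T (stdB j) (stdB k) (stdB l) - T (stdB i) (stdB l) (stdB l) = d i) (i : Fin 4) :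
    defect T i = d i := by
  obtain ⟨j, k, l, h⟩ := exists_directOrdering_head i
  rw [defect, Wc_eq T h, Zc_eq hT h, Zc_eq hT h.rotate, Zc_eq hT h.rotate.rotate,
    hd _ _ _ _ h, hd _ _ _ _ h.rotate, hd _ _ _ _ h.rotate.rotate]
  ring

lemma mem_PureSol_iff {T : Tri 4} : T ∈ PureSol ↔ T ∈ Torsion 4 ∧
    ∃ d : Fin 4 → ℝ, ∀ i j k l, DirectOrdering i j k l →
      T (stdB j) (stdB k) (stdB l) - T (stdB i) (stdB l) (stdB l) = d i := by
  refine ⟨fun hT => ⟨hT.1, defect T, fun i j k l h => defect_eq hT h⟩, ?_⟩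
  rintro ⟨hT, d, hd⟩
  refine ⟨hT, fun i j k l h => ?_⟩
  have := defect_unique hT hd i
  rw [defect] at this
  rw [Zc_eq hT h, hd _ _ _ _ h]
  linarith

/-! ### The three summands consist of solutions -/

lemma VecT_le_PureSol : VecT 4 ≤ PureSol := by
  rintro T ⟨ν, hν⟩
  refine mem_PureSol_iff.2 ⟨fun X Y Z => by rw [hν, hν]; ring, fun i => -ν (stdB i), ?_⟩
  intro i j k l h
  obtain ⟨-, -, hil, -, hjl, hkl⟩ := h.distinct
  simp [hν, inn_stdB, hil, hjl, hkl]

lemma AltT_le_PureSol : AltT 4 ≤ PureSol := by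
  rintro T ⟨h₁, h₂⟩
  have hcyc : ∀ X Y Z, T Y Z X = T X Y Z := fun X Y Z => by
    rw [h₂ Y Z X, h₁ Y X Z, neg_neg]
  have hself : ∀ X Y, T X Y Y = 0 := fun X Y => by
    have := h₂ X Y Y
    linarith
  have hT : T ∈ Torsion 4 := h₁
  choose j k l h using exists_directOrdering_head
  refine mem_PureSol_iff.2 ⟨hT, fun i => T (stdB (j i)) (stdB (k i)) (stdB (l i)), ?_⟩
  intro i j' k' l' h'
  rw [hself, sub_zero]
  rcases (h i).eq_rotate h' with ⟨rfl, rfl, rfl⟩ | ⟨rfl, rfl, rfl⟩ | ⟨rfl, rfl, rfl⟩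
  · rfl
  · exact hcyc _ _ _
  · exact (hcyc _ _ _).symm

lemma selfdual_coeff {T : Tri 4} (hT : T ∈ Aplus) {i j k l : Fin 4}
    (h : DirectOrdering i j k l) (Z : V 4) : T (stdB j) (stdB k) Z = T (stdB i) (stdB l) Z := by
  obtain ⟨a, b, c, habc⟩ := hT.2 Z
  simp only [directOrdering_iff, List.mem_cons, Prod.mk.injEq, List.not_mem_nil, or_false] at h
  rw [habc, habc]
  rcases h with ⟨rfl, rfl, rfl, rfl⟩ | ⟨rfl, rfl, rfl, rfl⟩ | ⟨rfl, rfl, rfl, rfl⟩ |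
    ⟨rfl, rfl, rfl, rfl⟩ | ⟨rfl, rfl, rfl, rfl⟩ | ⟨rfl, rfl, rfl, rfl⟩ | ⟨rfl, rfl, rfl, rfl⟩ |
    ⟨rfl, rfl, rfl, rfl⟩ | ⟨rfl, rfl, rfl, rfl⟩ | ⟨rfl, rfl, rfl, rfl⟩ | ⟨rfl, rfl, rfl, rfl⟩ |
    ⟨rfl, rfl, rfl, rfl⟩ <;> simp [sd₁, sd₂, sd₃, stdB]

lemma Aplus_le_PureSol : Aplus ≤ PureSol := by
  intro T hT
  refine mem_PureSol_iff.2 ⟨hT.1.1.1, 0, fun i j k l h => ?_⟩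
  simp [selfdual_coeff hT h]

/-! ### Decomposition of a solution -/

/-- The vectorial tensor `T_ν`. -/
def vecPart (ν : V 4 →ₗ[ℝ] ℝ) : Tri 4 :=
  triOf fun i j k => ν (stdB i) * inn (stdB j) (stdB k) - ν (stdB j) * inn (stdB i) (stdB k)

lemma vecPart_apply (ν : V 4 →ₗ[ℝ] ℝ) (X Y Z : V 4) :
    vecPart ν X Y Z = ν X * inn Y Z - ν Y * inn X Z := by
  rw [Tri_expand_two]
  simp only [linear_expand _ Z, linear_expand ν X, linear_expand ν Y, vecPart, triOf_apply,
    inn_stdB]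
  simp only [inn, Fin.sum_univ_four]
  simp
  ring

/-- The trace map as a linear functional. -/
def trL (T : Tri 4) : V 4 →ₗ[ℝ] ℝ := ∑ j, (T.flip (stdB j)).flip (stdB j)

lemma trL_apply (T : Tri 4) (X : V 4) : trL T X = ∑ j, T X (stdB j) (stdB j) := by
  simp [trL]

/-- The Bianchi map `𝔟` applied to `T`. -/
def bianchi (T : Tri 4) : Tri 4 :=
  triOf fun i j k => T (stdB i) (stdB j) (stdB k) + T (stdB j) (stdB k) (stdB i) +
    T (stdB k) (stdB i) (stdB j)

lemma bianchi_apply (T : Tri 4) (X Y Z : V 4) :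
    bianchi T X Y Z = T X Y Z + T Y Z X + T Z X Y := by
  rw [Tri_expand_two, Tri_expand_two T X, Tri_expand_two T Y, Tri_expand_two T Z]
  simp only [linear_expand _ Z, linear_expand _ X, linear_expand _ Y, bianchi, triOf_apply]
  simp only [Fin.sum_univ_four]
  ring

lemma vecPart_mem (ν : V 4 →ₗ[ℝ] ℝ) : vecPart ν ∈ VecT 4 := ⟨ν, vecPart_apply ν⟩

lemma bianchi_mem {T : Tri 4} (hT : T ∈ Torsion 4) : bianchi T ∈ AltT 4 := by
  constructor <;> intro X Y Z <;> rw [bianchi_apply, bianchi_apply]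
  · linear_combination hT X Y Z + hT Y Z X + hT Z X Y
  · linear_combination hT X Y Z + hT Y Z X + hT Z X Y

lemma inn_comm (X Y : V 4) : inn X Y = inn Y X := by
  simp [inn, mul_comm]

lemma sum_mul_inn (ν : V 4 →ₗ[ℝ] ℝ) (X : V 4) :
    ∑ j, ν (stdB j) * inn X (stdB j) = ν X := by
  rw [linear_expand ν X]
  exact Finset.sum_congr rfl fun j _ => by simp [inn, stdB, Pi.single_apply, mul_comm]

lemma trace_vec (ν : V 4 →ₗ[ℝ] ℝ) (X : V 4) :
    ∑ j, (ν X * inn (stdB j) (stdB j) - ν (stdB j) * inn X (stdB j)) = 3 * ν X := by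
  rw [Finset.sum_sub_distrib, sum_mul_inn]
  simp [inn_stdB]
  ring

lemma trace_alt {T : Tri 4} (hT : T ∈ AltT 4) (X : V 4) :
    ∑ j, T X (stdB j) (stdB j) = 0 :=
  Finset.sum_eq_zero fun j _ => by
    have := hT.2 X (stdB j) (stdB j)
    linarith

lemma bianchi_alt {T : Tri 4} (hT : T ∈ AltT 4) (X Y Z : V 4) :
    T X Y Z + T Y Z X + T Z X Y = 3 * T X Y Z := by
  linear_combination hT.2 Y Z X - hT.1 Y X Z + hT.1 Z X Y - hT.2 X Z Y

/-- The remainder of a torsion tensor after removing its vectorial and alternating parts. -/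
def cartanPart (T : Tri 4) : Tri 4 := T - vecPart ((1 / 3 : ℝ) • trL T) - (1 / 3 : ℝ) • bianchi T

lemma cartanPart_mem {T : Tri 4} (hT : T ∈ Torsion 4) : cartanPart T ∈ CartanA 4 := by
  refine ⟨⟨fun X Y Z => ?_, fun X Y Z => ?_⟩, fun X => ?_⟩
  · simp only [cartanPart, LinearMap.sub_apply, LinearMap.smul_apply, vecPart_apply,
      bianchi_apply, smul_eq_mul]
    linear_combination (2 / 3) * hT X Y Z - (1 / 3) * hT Y Z X - (1 / 3) * hT Z X Y
  · simp only [cartanPart, LinearMap.sub_apply, LinearMap.smul_apply, vecPart_apply,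
      bianchi_apply, smul_eq_mul, inn_comm Z X, inn_comm Y X, inn_comm Z Y]
    ring
  · have h := trace_alt (bianchi_mem hT) X
    simp only [cartanPart, LinearMap.sub_apply, LinearMap.smul_apply, smul_eq_mul,
      Finset.sum_sub_distrib, ← Finset.mul_sum, h]
    have hv := trace_vec ((1 / 3 : ℝ) • trL T) X
    simp only [← vecPart_apply] at hv
    rw [hv, LinearMap.smul_apply, trL_apply, smul_eq_mul]
    ring

lemma PureSol_inf_CartanA_le {R : Tri 4} (hP : R ∈ PureSol) (hA : R ∈ CartanA 4) :
    R ∈ Aplus := by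
  have hT : R ∈ Torsion 4 := hA.1.1
  have hd : ∀ i, defect R i = 0 := fun i => by
    obtain ⟨j, k, l, h⟩ := exists_directOrdering_head i
    have h₁ := defect_eq hP h
    have h₂ := defect_eq hP h.rotate
    have h₃ := defect_eq hP h.rotate.rotate
    have hb := hA.1.2 (stdB j) (stdB k) (stdB l)
    have hc := hA.2 (stdB i)
    rw [h.sum_eq, Torsion_self hT] at hc
    linarith
  have key : ∀ i j k l, DirectOrdering i j k l →
      R (stdB j) (stdB k) (stdB l) = R (stdB i) (stdB l) (stdB l) := fun i j k l h => by
    have := defect_eq hP h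
    rw [hd] at this
    linarith
  have hself := Torsion_self hT
  -- `R_{jkm} = R_{ilm}`: each value of `m` is an instance of `key`, up to antisymmetry
  have hsd : ∀ i j k l, DirectOrdering i j k l →
      ∀ Z, R (stdB j) (stdB k) Z = R (stdB i) (stdB l) Z := fun i j k l h Z => by
    have hm : ∀ m, R (stdB j) (stdB k) (stdB m) = R (stdB i) (stdB l) (stdB m) := fun m => by
      obtain ⟨e₁, e₂, e₃⟩ := h.double_transpositions
      rcases h.mem m with rfl | rfl | rfl | rfl
      · rw [hT, key _ _ _ _ e₃, hT (stdB m) (stdB l)]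
      · rw [hT, hT (stdB i), key _ _ _ _ e₂]
      · rw [key _ _ _ _ e₁]
      · rw [key _ _ _ _ h]
    rw [linear_expand _ Z, linear_expand (R (stdB i) (stdB l)) Z]
    simp only [hm]
  refine ⟨hA, fun Z => ⟨R (stdB 0) (stdB 1) Z, R (stdB 0) (stdB 2) Z, R (stdB 0) (stdB 3) Z,
    fun X Y => ?_⟩⟩
  have h₁ := hsd 0 2 3 1 (by decide) Z
  have h₂ := hsd 0 3 1 2 (by decide) Z
  have h₃ := hsd 0 1 2 3 (by decide) Z
  rw [Tri_expand_two]
  simp only [Fin.sum_univ_four, hself, sd₁, sd₂, sd₃]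
  rw [hT (stdB 1) (stdB 0), hT (stdB 2) (stdB 0), hT (stdB 3) (stdB 0), hT (stdB 2) (stdB 1),
    hT (stdB 3) (stdB 2), hT (stdB 1) (stdB 3), h₁, h₂, h₃]
  ring

lemma PureSol_eq : PureSol = VecT 4 ⊔ Aplus ⊔ AltT 4 := by
  refine le_antisymm (fun T hT => ?_)
    (sup_le (sup_le VecT_le_PureSol Aplus_le_PureSol) AltT_le_PureSol)
  have hv := vecPart_mem ((1 / 3 : ℝ) • trL T)
  have ha := (AltT 4).smul_mem (1 / 3 : ℝ) (bianchi_mem hT.1)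
  have hR : cartanPart T ∈ Aplus := PureSol_inf_CartanA_le
    (PureSol.sub_mem (PureSol.sub_mem hT (VecT_le_PureSol hv)) (AltT_le_PureSol ha))
    (cartanPart_mem hT.1)
  have hsum : T = vecPart ((1 / 3 : ℝ) • trL T) + cartanPart T + (1 / 3 : ℝ) • bianchi T := by
    rw [cartanPart]
    abel
  rw [hsum]
  exact Submodule.add_mem_sup (Submodule.add_mem_sup hv hR) ha

/-! ### Independence -/

/-- A sum `T_ν + A + B = 0` with `A ∈ 𝒜₊` and `B` alternating is trivial: the trace gives `ν = 0`,
then the Bianchi map gives `B = 0`. -/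
lemma independent {S A B : Tri 4} (hS : S ∈ VecT 4) (hA : A ∈ Aplus) (hB : B ∈ AltT 4)
    (h : S + A + B = 0) : S = 0 ∧ A = 0 ∧ B = 0 := by
  obtain ⟨ν, hν⟩ := hS
  have happ : ∀ X Y Z, S X Y Z + A X Y Z + B X Y Z = 0 := fun X Y Z => by
    have := congrArg (fun U : Tri 4 => U X Y Z) h
    simpa using this
  have hν0 : ∀ X, ν X = 0 := fun X => by
    have hs : ∑ j, (S X (stdB j) (stdB j) + A X (stdB j) (stdB j) + B X (stdB j) (stdB j)) = 0 :=
      Finset.sum_eq_zero fun j _ => happ _ _ _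
    have hc := hA.1.2 X
    have hv := trace_vec ν X
    simp only [← hν] at hv
    rw [Finset.sum_add_distrib, Finset.sum_add_distrib, hc, trace_alt hB, hv] at hs
    linarith
  have hS0 : S = 0 := LinearMap.ext fun X => LinearMap.ext fun Y => LinearMap.ext fun Z => by
    simp [hν, hν0]
  subst hS0
  have hB0 : B = 0 := LinearMap.ext fun X => LinearMap.ext fun Y => LinearMap.ext fun Z => by
    have h₁ := happ X Y Z
    have h₂ := happ Y Z X
    have h₃ := happ Z X Y
    have hb := hA.1.1.2 X Y Z
    have hB3 := bianchi_alt hB X Y Z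
    simp only [LinearMap.zero_apply] at h₁ h₂ h₃ ⊢
    linarith
  subst hB0
  exact ⟨rfl, by simpa using h, rfl⟩

/-! ### The dimension -/

/-- The parameters of a solution: the off-diagonal entries are `T_{ill}`, the diagonal ones are
the constants `d_i = T_{jkl} - T_{ill}`. -/
def solParam : PureSol →ₗ[ℝ] (Fin 4 → Fin 4 → ℝ) where
  toFun T i l := if i = l then defect T i else (T : Tri 4) (stdB i) (stdB l) (stdB l)
  map_add' T S := by
    funext i l
    by_cases h : i = l
    · simp only [h, if_true, Pi.add_apply, defect, trc, Submodule.coe_add, Wc_add,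
        LinearMap.add_apply, Finset.sum_add_distrib]
      ring
    · simp [h]
  map_smul' c T := by
    funext i l
    by_cases h : i = l
    · simp only [h, if_true, Pi.smul_apply, defect, trc, Submodule.coe_smul, Wc_smul,
        LinearMap.smul_apply, ← Finset.mul_sum, smul_eq_mul, RingHom.id_apply]
      ring
    · simp [h]

lemma solParam_injective : Function.Injective solParam := by
  rw [injective_iff_map_eq_zero]
  rintro ⟨T, hP⟩ h
  have hoff : ∀ i l, T (stdB i) (stdB l) (stdB l) = 0 := fun i l => by
    by_cases hil : i = l
    · rw [hil, Torsion_self hP.1]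
    · have := congrFun (congrFun h i) l
      simpa [solParam, hil] using this
  have hdiag : ∀ i, defect T i = 0 := fun i => by
    have := congrFun (congrFun h i) i
    simpa [solParam] using this
  have hdir : ∀ i j k l, DirectOrdering i j k l → T (stdB j) (stdB k) (stdB l) = 0 :=
    fun i j k l hd => by
      have := defect_eq hP hd
      rw [hoff, hdiag] at this
      linarith
  refine Subtype.ext (Tri_ext fun j k l => ?_)
  change T (stdB j) (stdB k) (stdB l) = 0
  by_cases h₁ : j = k
  · rw [h₁, Torsion_self hP.1]
  by_cases h₂ : j = l
  · rw [hP.1, h₂, hoff, neg_zero]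
  by_cases h₃ : k = l
  · rw [h₃, hoff]
  obtain ⟨i, hi | hi⟩ := exists_directOrdering h₁ h₂ h₃
  · exact hdir i j k l hi
  · rw [hP.1, hdir i k j l hi, neg_zero]

/-- The coefficients of the solution with parameter matrix `M`. -/
def solCoeff (M : Fin 4 → Fin 4 → ℝ) (i j k : Fin 4) : ℝ :=
  (∑ m, if DirectOrdering m i j k then M m m + M m k else 0)
    - (∑ m, if DirectOrdering m j i k then M m m + M m k else 0)
    + (if j = k then M i j else 0) - (if i = k then M j i else 0)

lemma solCoeff_direct (M : Fin 4 → Fin 4 → ℝ) {i j k l : Fin 4} (h : DirectOrdering i j k l) :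
    solCoeff M j k l = M i i + M i l := by
  obtain ⟨-, -, -, -, hjl, hkl⟩ := h.distinct
  simp [solCoeff, (h.tail _).1, (h.tail _).2, hjl, hkl]

lemma solCoeff_off (M : Fin 4 → Fin 4 → ℝ) {i l : Fin 4} (h : i ≠ l) :
    solCoeff M i l l = M i l := by
  have h₁ : ∀ m, ¬ DirectOrdering m i l l := fun m hd => hd.distinct.2.2.2.2.2 rfl
  have h₂ : ∀ m, ¬ DirectOrdering m l i l := fun m hd => hd.distinct.2.2.2.2.1 rfl
  simp [solCoeff, h₁, h₂, h]

lemma solParam_surjective : Function.Surjective solParam := by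
  intro M
  have hT : triOf (solCoeff M) ∈ Torsion 4 := mem_Torsion_of_coeff fun i j k => by
    rw [triOf_apply, triOf_apply, solCoeff, solCoeff]
    ring
  have hd : ∀ i j k l, DirectOrdering i j k l →
      triOf (solCoeff M) (stdB j) (stdB k) (stdB l) -
        triOf (solCoeff M) (stdB i) (stdB l) (stdB l) = M i i := fun i j k l h => by
    rw [triOf_apply, triOf_apply, solCoeff_direct M h, solCoeff_off M h.distinct.2.2.1]
    ring
  refine ⟨⟨triOf (solCoeff M), mem_PureSol_iff.2 ⟨hT, fun i => M i i, hd⟩⟩, ?_⟩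
  funext i l
  by_cases h : i = l
  · subst h
    simpa [solParam] using defect_unique hT hd i
  · simp [solParam, h, triOf_apply, solCoeff_off M h]

/-- the space of torsion tensors on `ℝ⁴` satisfying `(1/3)W_i = Z_{ijk}`
for every direct ordering equals the internal direct sum `Vec ⊕ 𝒜₊ ⊕ Alt`, and has
dimension 16. -/
theorem puresol_decomposition :
    (PureSol = VecT 4 ⊔ Aplus ⊔ AltT 4) ∧
    (VecT 4 ⊓ (Aplus ⊔ AltT 4) = ⊥) ∧
    (Aplus ⊓ (VecT 4 ⊔ AltT 4) = ⊥) ∧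
    (AltT 4 ⊓ (VecT 4 ⊔ Aplus) = ⊥) ∧
    Module.finrank ℝ ↥PureSol = 16 := by
  refine ⟨PureSol_eq, ?_, ?_, ?_, ?_⟩
  · refine (Submodule.eq_bot_iff _).2 ?_
    rintro T ⟨hT, hsup⟩
    obtain ⟨A, hA, B, hB, rfl⟩ := Submodule.mem_sup.1 hsup
    exact (independent hT (Aplus.neg_mem hA) ((AltT 4).neg_mem hB) (by abel)).1
  · refine (Submodule.eq_bot_iff _).2 ?_
    rintro T ⟨hT, hsup⟩
    obtain ⟨S, hS, B, hB, rfl⟩ := Submodule.mem_sup.1 hsup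
    exact (independent ((VecT 4).neg_mem hS) hT ((AltT 4).neg_mem hB) (by abel)).2.1
  · refine (Submodule.eq_bot_iff _).2 ?_
    rintro T ⟨hT, hsup⟩
    obtain ⟨S, hS, A, hA, rfl⟩ := Submodule.mem_sup.1 hsup
    exact (independent ((VecT 4).neg_mem hS) (Aplus.neg_mem hA) hT (by abel)).2.2
  · rw [(LinearEquiv.ofBijective solParam ⟨solParam_injective, solParam_surjective⟩).finrank_eq]
    rw [Module.finrank_pi_fintype]
    simp only [Module.finrank_fin_fun, Finset.sum_const, Finset.card_univ, Fintype.card_fin,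
      smul_eq_mul, Nat.reduceMul]
end
end

section
/- The G₂ 3-form φ of gwistor space satisfies α ∧ φ = 0 and α₂ ∧ φ = 0. -/
/-!
Expand both products into monomials in `e⁰, …, e⁶`. Each monomial of `α`, and each monomial of
`α₂`, shares at least one index with every monomial of `φ`, so every term of the expansion has a
repeated factor and vanishes. Formally, the relations `e i * e i = 0` and `e j * e i = -(e i * e j)`
for `i < j`, read as rewrite rules on right-associated words, sort each word until two equal
factors meet.
-/

noncomputable section

open ExteriorAlgebra

/-- The exterior algebra of forms generated by the standard (dual) basis of `ℝ⁷`. -/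
abbrev Ext7 := ExteriorAlgebra ℝ (Fin 7 → ℝ)

/-- The basis 1-forms `e⁰, …, e⁶`. -/
def e (i : Fin 7) : Ext7 := ι ℝ (Pi.single i 1)

/-- The 1-form `μ = e⁰`. -/
def μ : Ext7 := e 0

/-- The 2-form `β = e¹∧e⁴ + e²∧e⁵ + e³∧e⁶`. -/
def β : Ext7 := e 1 * e 4 + e 2 * e 5 + e 3 * e 6

/-- The 3-form `α = e⁴∧e⁵∧e⁶`. -/
def α : Ext7 := e 4 * e 5 * e 6

/-- The 3-form `α₁ = e¹∧e⁵∧e⁶ + e²∧e⁶∧e⁴ + e³∧e⁴∧e⁵`. -/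
def α₁ : Ext7 := e 1 * e 5 * e 6 + e 2 * e 6 * e 4 + e 3 * e 4 * e 5

/-- The 3-form `α₂ = e¹∧e²∧e⁶ + e²∧e³∧e⁴ + e³∧e¹∧e⁵`. -/
def α₂ : Ext7 := e 1 * e 2 * e 6 + e 2 * e 3 * e 4 + e 3 * e 1 * e 5

/-- The `G₂` 3-form `φ = α + μ∧β − α₂` of gwistor space. -/
def φ : Ext7 := α + μ * β - α₂

/-- The 4-form `Φ = e⁰∧e¹∧e²∧e³ − (1/2)β∧β − μ∧α₁`, the Hodge dual of `φ`. -/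
def Φ : Ext7 := e 0 * e 1 * e 2 * e 3 - (1/2 : ℝ) • (β * β) - μ * α₁

/-- The volume form `Vol = e⁰∧e¹∧e²∧e³∧e⁴∧e⁵∧e⁶`. -/
def Vol : Ext7 := e 0 * e 1 * e 2 * e 3 * e 4 * e 5 * e 6

theorem e_mul_self (i : Fin 7) : e i * e i = 0 :=
  ι_sq_zero _

theorem e_mul_self_mul (i : Fin 7) (x : Ext7) : e i * (e i * x) = 0 := by
  rw [← mul_assoc, e_mul_self, zero_mul]

/-- Anticommutation of basis 1-forms; the hypothesis `i < j` orients it as a terminating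
rewrite rule. -/
theorem e_mul_swap {i j : Fin 7} (_ : i < j) : e j * e i = -(e i * e j) :=
  eq_neg_of_add_eq_zero_left (ι_add_mul_swap _ _)

/-- `e_mul_swap` inside a right-associated word. -/
theorem e_mul_swap_mul {i j : Fin 7} (h : i < j) (x : Ext7) :
    e j * (e i * x) = -(e i * (e j * x)) := by
  rw [← mul_assoc, e_mul_swap h, neg_mul, mul_assoc]

/-- `α ∧ φ = 0` and `α₂ ∧ φ = 0`. -/
theorem alpha_wedge_phi_vanish :
    α * φ = 0 ∧ α₂ * φ = 0 := by
  constructor <;>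
    simp [φ, α, α₂, μ, β, mul_add, add_mul, mul_sub, mul_assoc,
      e_mul_self, e_mul_self_mul, e_mul_swap, e_mul_swap_mul]
end
end
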